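/- arXiv:1803.11026 — 2 statements merged into one kernel-verified Lean document; each statement's English description precedes it below -/
import Mathlib

section
/- Let N ≥ 2 be an integer, ε ∈ (0,1], μ := ε²/N, d > 1/3, and define B̄₁ := {(z₁,…,z_N) ∈ (ℝ³)^N : |z_k − z_l| < μ^d for some k, l ∈ {2,…,N} with k ≠ l}. There is a universal constant C such that for every ψ ∈ C_c^∞((ℝ³)^N; ℂ): ‖1_{B̄₁} ψ‖ ≤ C μ^{d − 1/3} ( Σ_{k=2}^N ( ‖∂_{x_k} ψ‖² + ε² ‖∇_{y_k} ψ‖² ) )^{1/2}. -/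
open MeasureTheory

open Module
open scoped ENNReal NNReal

/-!
Composing with an invertible linear map `L` of an `n`-dimensional space turns the
Gagliardo–Nirenberg–Sobolev inequality into `‖u‖_q ≤ C |det L| ^ (-1/n) ‖Du ∘ L‖_p`, where
`1/q = 1/p - 1/n`, and Hölder's inequality on a set `S` gives
`‖1_S u‖_p ≤ C (|S| / |det L|) ^ (1/n) ‖Du ∘ L‖_p`. This is applied in the position of the
particle `k` with the others fixed: the positions in which `k` is within distance `r` of another
particle form a set of volume at most `N |B(0, r)|`. With `p = 2`, `n = 3`,
`L = diag(1, ε, ε)` and `r = μ ^ d`, the gain is `(N / ε²) ^ (1/3) r = μ ^ (d - 1/3)` up to a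
constant, and the squares of these bounds sum over `k`.
-/

section Sobolev

variable {E F : Type*} [NormedAddCommGroup E] [NormedSpace ℝ E] [FiniteDimensional ℝ E]
  [NormedAddCommGroup F]

lemma hasCompactSupport_comp_continuousLinearMap {L : E →L[ℝ] E} (hL : L.det ≠ 0) {u : E → F}
    (hu : HasCompactSupport u) : HasCompactSupport (u ∘ L) :=
  hu.comp_homeomorph
    (LinearMap.equivOfDetNeZero (L : E →ₗ[ℝ] E) hL).toContinuousLinearEquiv.toHomeomorph

variable [MeasurableSpace E] [BorelSpace E] (μ : Measure E) [μ.IsAddHaarMeasure]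

lemma eLpNorm_comp_continuousLinearMap {L : E →L[ℝ] E} (hL : L.det ≠ 0) {u : E → F}
    (hu : AEStronglyMeasurable u μ) (p : ℝ≥0∞) :
    eLpNorm (u ∘ L) p μ = ENNReal.ofReal |L.det⁻¹| ^ p.toReal⁻¹ * eLpNorm u p μ := by
  have hmap : μ.map L = ENNReal.ofReal |L.det⁻¹| • μ :=
    Measure.map_linearMap_addHaar_eq_smul_addHaar μ hL
  rw [← eLpNorm_map_measure (hmap ▸ hu.smul_measure _) L.measurable.aemeasurable, hmap,
    eLpNorm_smul_measure_of_ne_zero (by simpa using hL), smul_eq_mul,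
    one_div, ENNReal.toReal_inv]

variable [InnerProductSpace ℝ F] {u : E → F} {p : ℝ≥0} {L : E →L[ℝ] E}

theorem eLpNorm_le_eLpNorm_fderiv_comp (hL : L.det ≠ 0) (hu : ContDiff ℝ 1 u)
    (hsupp : HasCompactSupport u) (hp : 1 ≤ p) (hn : 0 < finrank ℝ E) {q : ℝ≥0}
    (hq : (q : ℝ)⁻¹ = (p : ℝ)⁻¹ - (finrank ℝ E : ℝ)⁻¹) :
    eLpNorm u q μ ≤ eLpNormLESNormFDerivOfEqInnerConst μ p *
      ENNReal.ofReal |L.det⁻¹| ^ (finrank ℝ E : ℝ)⁻¹ *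
        eLpNorm (fun x ↦ fderiv ℝ u x ∘L L) p μ := by
  set C := eLpNormLESNormFDerivOfEqInnerConst μ p
  set c := ENNReal.ofReal |L.det⁻¹|
  have hc0 : c ≠ 0 := by simpa [c] using hL
  have hctop : c ≠ ∞ := ENNReal.ofReal_ne_top
  have hcq0 : c ^ (q : ℝ)⁻¹ ≠ 0 := by simp [hc0, hctop]
  have hcqtop : c ^ (q : ℝ)⁻¹ ≠ ∞ := by simp [hc0, hctop]
  have hfderiv : fderiv ℝ (u ∘ L) = (fun x ↦ fderiv ℝ u x ∘L L) ∘ L := by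
    ext1 x
    rw [fderiv_comp x (hu.differentiable one_ne_zero _) L.differentiableAt, L.fderiv,
      Function.comp_apply]
  have hcont : Continuous fun x ↦ fderiv ℝ u x ∘L L :=
    (hu.continuous_fderiv one_ne_zero).clm_comp continuous_const
  refine (ENNReal.mul_le_mul_iff_right hcq0 hcqtop).1 ?_
  calc c ^ (q : ℝ)⁻¹ * eLpNorm u q μ
      = eLpNorm (u ∘ L) q μ :=
        (eLpNorm_comp_continuousLinearMap μ hL hu.continuous.aestronglyMeasurable q).symm
    _ ≤ C * eLpNorm (fderiv ℝ (u ∘ L)) p μ :=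
        eLpNorm_le_eLpNorm_fderiv_of_eq_inner μ (hu.comp L.contDiff)
          (hasCompactSupport_comp_continuousLinearMap hL hsupp) hp hn hq
    _ = C * (c ^ (p : ℝ)⁻¹ * eLpNorm (fun x ↦ fderiv ℝ u x ∘L L) p μ) := by
        rw [hfderiv, eLpNorm_comp_continuousLinearMap μ hL hcont.aestronglyMeasurable,
          ENNReal.coe_toReal]
    _ = c ^ (q : ℝ)⁻¹ *
          (C * c ^ (finrank ℝ E : ℝ)⁻¹ * eLpNorm (fun x ↦ fderiv ℝ u x ∘L L) p μ) := by
        rw [show (p : ℝ)⁻¹ = (q : ℝ)⁻¹ + (finrank ℝ E : ℝ)⁻¹ by rw [hq]; ring,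
          ENNReal.rpow_add _ _ hc0 hctop]
        ring

theorem eLpNorm_restrict_le_eLpNorm_fderiv_comp (hL : L.det ≠ 0) (hu : ContDiff ℝ 1 u)
    (hsupp : HasCompactSupport u) (hp : 1 ≤ p) (hpn : p < finrank ℝ E) (S : Set E) :
    eLpNorm u p (μ.restrict S) ≤ eLpNormLESNormFDerivOfEqInnerConst μ p *
      (ENNReal.ofReal |L.det⁻¹| * μ S) ^ (finrank ℝ E : ℝ)⁻¹ *
        eLpNorm (fun x ↦ fderiv ℝ u x ∘L L) p μ := by
  have hp0 : 0 < p := one_pos.trans_le hp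
  have hn : 0 < (finrank ℝ E : ℝ≥0) := hp0.trans hpn
  have hlt : (finrank ℝ E : ℝ≥0)⁻¹ < p⁻¹ := by gcongr
  set q : ℝ≥0 := (p⁻¹ - (finrank ℝ E : ℝ≥0)⁻¹)⁻¹ with hqdef
  have hq : (q : ℝ)⁻¹ = (p : ℝ)⁻¹ - (finrank ℝ E : ℝ)⁻¹ := by
    simp [hqdef, NNReal.coe_sub hlt.le]
  have hpq : p ≤ q := by
    rw [hqdef, le_inv_comm₀ hp0 (tsub_pos_of_lt hlt)]
    exact tsub_le_self
  have hholder := eLpNorm_le_eLpNorm_mul_rpow_measure_univ (μ := μ.restrict S)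
    (ENNReal.coe_le_coe.2 hpq) hu.continuous.aestronglyMeasurable
  have hexp : 1 / (p : ℝ≥0∞).toReal - 1 / (q : ℝ≥0∞).toReal = (finrank ℝ E : ℝ)⁻¹ := by
    simp [hq]
  rw [hexp, Measure.restrict_apply_univ] at hholder
  calc eLpNorm u p (μ.restrict S)
      ≤ eLpNorm u q μ * μ S ^ (finrank ℝ E : ℝ)⁻¹ :=
        hholder.trans (mul_le_mul_left (eLpNorm_mono_measure u Measure.restrict_le_self) _)
    _ ≤ eLpNormLESNormFDerivOfEqInnerConst μ p *
          ENNReal.ofReal |L.det⁻¹| ^ (finrank ℝ E : ℝ)⁻¹ *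
          eLpNorm (fun x ↦ fderiv ℝ u x ∘L L) p μ * μ S ^ (finrank ℝ E : ℝ)⁻¹ :=
        mul_le_mul_left
          (eLpNorm_le_eLpNorm_fderiv_comp μ hL hu hsupp hp (by exact_mod_cast hn) hq) _
    _ = _ := by
        rw [ENNReal.mul_rpow_of_nonneg _ _ (by positivity)]
        ring

end Sobolev

lemma fderiv_comp_update {ι 𝕜 F : Type*} [Finite ι] [DecidableEq ι] [NontriviallyNormedField 𝕜]
    {E : ι → Type*} [∀ i, NormedAddCommGroup (E i)] [∀ i, NormedSpace 𝕜 (E i)]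
    [NormedAddCommGroup F] [NormedSpace 𝕜 F] {ψ : (∀ i, E i) → F} (x : ∀ i, E i) (k : ι) (w : E k)
    (hψ : DifferentiableAt 𝕜 ψ (Function.update x k w)) :
    fderiv 𝕜 (fun w ↦ ψ (Function.update x k w)) w =
      fderiv 𝕜 ψ (Function.update x k w) ∘L ContinuousLinearMap.single 𝕜 E k := by
  have := Fintype.ofFinite ι
  refine (hψ.hasFDerivAt.comp w (hasFDerivAt_update x w)).fderiv.trans ?_
  congr 1
  ext v i : 2
  rcases eq_or_ne i k with rfl | hik
  · simp
  · simp [hik]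

section Product

variable {ι : Type*} [Fintype ι] [DecidableEq ι]

theorem eLpNorm_pi_le_of_update_le {X : ι → Type*} [∀ i, MeasurableSpace (X i)]
    (μ : ∀ i, Measure (X i)) [∀ i, SigmaFinite (μ i)] {F G : Type*} [NormedAddCommGroup F]
    [NormedAddCommGroup G] {f : (∀ i, X i) → F} {g : (∀ i, X i) → G} (hf : StronglyMeasurable f)
    (hg : StronglyMeasurable g) (k : ι) {p : ℝ≥0} (hp : p ≠ 0) {c : ℝ≥0∞}
    (h : ∀ x, eLpNorm (fun w ↦ f (Function.update x k w)) p (μ k) ≤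
      c * eLpNorm (fun w ↦ g (Function.update x k w)) p (μ k)) :
    eLpNorm f p (Measure.pi μ) ≤ c * eLpNorm g p (Measure.pi μ) := by
  have hp' : 0 < (p : ℝ) := by positivity
  have hgm : Measurable fun x ↦ ‖g x‖ₑ ^ (p : ℝ) := hg.enorm.pow_const _
  rw [← ENNReal.rpow_le_rpow_iff hp', ENNReal.mul_rpow_of_nonneg _ _ hp'.le,
    eLpNorm_nnreal_pow_eq_lintegral hp, eLpNorm_nnreal_pow_eq_lintegral hp,
    ← lintegral_const_mul _ hgm]
  refine lintegral_le_of_lmarginal_le {k} (hf.enorm.pow_const _) (hgm.const_mul _) fun x ↦ ?_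
  simp only [lmarginal_singleton]
  rw [lintegral_const_mul _ (by exact hgm.comp (measurable_update x)),
    ← eLpNorm_nnreal_pow_eq_lintegral hp,
    ← eLpNorm_nnreal_pow_eq_lintegral hp, ← ENNReal.mul_rpow_of_nonneg _ _ hp'.le]
  exact ENNReal.rpow_le_rpow (h x) hp'.le

lemma eLpNorm_restrict_biUnion_finset_rpow_le {α β F : Type*} [MeasurableSpace α]
    [NormedAddCommGroup F] {ν : Measure α} (T : Finset β) (s : β → Set α) (f : α → F) {p : ℝ≥0}
    (hp : p ≠ 0) :
    eLpNorm f p (ν.restrict (⋃ k ∈ T, s k)) ^ (p : ℝ) ≤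
      ∑ k ∈ T, eLpNorm f p (ν.restrict (s k)) ^ (p : ℝ) := by
  simp only [eLpNorm_nnreal_pow_eq_lintegral hp]
  have h := lintegral_iUnion_le (μ := ν) (fun k : T ↦ s k) fun a ↦ ‖f a‖ₑ ^ (p : ℝ)
  rw [tsum_fintype, Finset.sum_coe_sort T fun k ↦ ∫⁻ a in s k, ‖f a‖ₑ ^ (p : ℝ) ∂ν] at h
  rwa [← Finset.set_biUnion_coe, Set.biUnion_eq_iUnion]

end Product

section NearCollision

variable {ι E F : Type*} [NormedAddCommGroup E]

/-- The configurations in which two distinct particles of `T` are at distance less than `r`. -/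
def nearCollisionSet (T : Finset ι) (r : ℝ) : Set (ι → E) :=
  {z | ∃ k ∈ T, ∃ l ∈ T, k ≠ l ∧ ‖z k - z l‖ < r}

lemma nearCollisionSet_eq_biUnion [DecidableEq ι] (T : Finset ι) (r : ℝ) :
    (nearCollisionSet T r : Set (ι → E)) = ⋃ k ∈ T, ⋃ l ∈ T.erase k, {z | ‖z k - z l‖ < r} := by
  ext z
  simp only [nearCollisionSet, Set.mem_iUnion, Finset.mem_erase, Set.mem_ofPred_eq, exists_prop]
  grind

variable [MeasurableSpace E] [BorelSpace E]

lemma measure_update_preimage_biUnion_le [DecidableEq ι] (μ : Measure E) [μ.IsAddLeftInvariant]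
    {T : Finset ι} {k : ι} (hk : k ∉ T) (r : ℝ) (x : ι → E) :
    μ (Function.update x k ⁻¹' ⋃ l ∈ T, {z | ‖z k - z l‖ < r}) ≤
      T.card * μ (Metric.ball 0 r) := by
  have hpre : Function.update x k ⁻¹' ⋃ l ∈ T, {z | ‖z k - z l‖ < r} ⊆
      ⋃ l ∈ T, Metric.ball (x l) r := by
    intro w hw
    simp only [Set.mem_preimage, Set.mem_iUnion, exists_prop, Set.mem_ofPred_eq] at hw
    obtain ⟨l, hl, hlt⟩ := hw
    refine Set.mem_biUnion hl ?_
    rwa [Function.update_self, Function.update_of_ne (by grind), ← mem_ball_iff_norm] at hlt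
  calc μ (Function.update x k ⁻¹' ⋃ l ∈ T, {z | ‖z k - z l‖ < r})
      ≤ ∑ l ∈ T, μ (Metric.ball (x l) r) :=
        (measure_mono hpre).trans (measure_biUnion_finset_le _ _)
    _ = T.card * μ (Metric.ball 0 r) := by
        have hball (c : E) : μ (Metric.ball c r) = μ (Metric.ball 0 r) := by
          rw [← measure_preimage_add μ c, preimage_add_ball, sub_self]
        simp only [hball, Finset.sum_const, nsmul_eq_mul]

variable [NormedSpace ℝ E] [NormedAddCommGroup F]

/-- The derivative of `ψ` with respect to the position of the particle `k`. -/
noncomputable def particleFDeriv [NormedSpace ℝ F] [DecidableEq ι] (ψ : (ι → E) → F) (k : ι)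
    (z : ι → E) : E →L[ℝ] F :=
  fderiv ℝ ψ z ∘L ContinuousLinearMap.single ℝ (fun _ ↦ E) k

variable [Fintype ι] [DecidableEq ι] [FiniteDimensional ℝ E] [InnerProductSpace ℝ F]
  (μ : Measure E) [μ.IsAddHaarMeasure] {L : E →L[ℝ] E} {ψ : (ι → E) → F} {p : ℝ≥0}

theorem eLpNorm_restrict_le_eLpNorm_particleFDeriv_comp (hL : L.det ≠ 0) (hψ : ContDiff ℝ 1 ψ)
    (hsupp : HasCompactSupport ψ) (hp : 1 ≤ p) (hpn : p < finrank ℝ E) (k : ι)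
    {B : Set (ι → E)} (hB : MeasurableSet B) {V : ℝ≥0∞}
    (hV : ∀ x : ι → E, μ (Function.update x k ⁻¹' B) ≤ V) :
    eLpNorm ψ p ((Measure.pi fun _ ↦ μ).restrict B) ≤ eLpNormLESNormFDerivOfEqInnerConst μ p *
      (ENNReal.ofReal |L.det⁻¹| * V) ^ (finrank ℝ E : ℝ)⁻¹ *
        eLpNorm (fun z ↦ particleFDeriv ψ k z ∘L L) p (Measure.pi fun _ ↦ μ) := by
  have hpartial : Continuous fun z ↦ particleFDeriv ψ k z ∘L L :=
    ((hψ.continuous_fderiv one_ne_zero).clm_comp continuous_const).clm_comp continuous_const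
  rw [← eLpNorm_indicator_eq_eLpNorm_restrict hB]
  refine eLpNorm_pi_le_of_update_le (fun _ ↦ μ) (hψ.continuous.stronglyMeasurable.indicator hB)
    hpartial.stronglyMeasurable k (one_pos.trans_le hp).ne' fun x ↦ ?_
  have hpre : MeasurableSet (Function.update x k ⁻¹' B) := measurable_update x hB
  have hslice := eLpNorm_restrict_le_eLpNorm_fderiv_comp μ hL (hψ.comp (contDiff_update 1 x k))
    (hsupp.comp_isClosedEmbedding (isClosedEmbedding_update x k)) hp hpn
    (Function.update x k ⁻¹' B)
  rw [← eLpNorm_indicator_eq_eLpNorm_restrict hpre] at hslice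
  simp only [Function.comp_def, fderiv_comp_update x k _ (hψ.differentiable one_ne_zero _)]
    at hslice
  refine hslice.trans (mul_le_mul_left ?_ _)
  gcongr
  exact hV x

theorem eLpNorm_restrict_nearCollisionSet_rpow_le (hL : L.det ≠ 0) (hψ : ContDiff ℝ 1 ψ)
    (hsupp : HasCompactSupport ψ) (hp : 1 ≤ p) (hpn : p < finrank ℝ E) (T : Finset ι) (r : ℝ) :
    eLpNorm ψ p ((Measure.pi fun _ ↦ μ).restrict (nearCollisionSet T r)) ^ (p : ℝ) ≤
      (eLpNormLESNormFDerivOfEqInnerConst μ p * (ENNReal.ofReal |L.det⁻¹| *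
        (T.card * μ (Metric.ball 0 r))) ^ (finrank ℝ E : ℝ)⁻¹) ^ (p : ℝ) *
        ∑ k ∈ T,
          eLpNorm (fun z ↦ particleFDeriv ψ k z ∘L L) p (Measure.pi fun _ ↦ μ) ^ (p : ℝ) := by
  rw [nearCollisionSet_eq_biUnion, Finset.mul_sum]
  refine (eLpNorm_restrict_biUnion_finset_rpow_le T _ ψ (one_pos.trans_le hp).ne').trans
    (Finset.sum_le_sum fun k _ ↦ ?_)
  rw [← ENNReal.mul_rpow_of_nonneg _ _ p.coe_nonneg]
  have hopen : IsOpen (⋃ l ∈ T.erase k, {z : ι → E | ‖z k - z l‖ < r}) :=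
    isOpen_biUnion fun l _ ↦ isOpen_lt (by fun_prop) continuous_const
  have hslice (x : ι → E) :
      μ (Function.update x k ⁻¹' ⋃ l ∈ T.erase k, {z | ‖z k - z l‖ < r}) ≤
        T.card * μ (Metric.ball 0 r) :=
    (measure_update_preimage_biUnion_le μ (T.notMem_erase k) r x).trans
      (by gcongr; exact T.erase_subset k)
  exact ENNReal.rpow_le_rpow (eLpNorm_restrict_le_eLpNorm_particleFDeriv_comp μ hL hψ hsupp hp hpn
    k hopen.measurableSet hslice) p.coe_nonneg

end NearCollision

section WeightedEnergy

lemma opNorm_sq_le_sum_norm_apply_sq {𝕜 κ E F : Type*} [RCLike 𝕜] [Fintype κ]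
    [NormedAddCommGroup E] [InnerProductSpace 𝕜 E] [SeminormedAddCommGroup F] [NormedSpace 𝕜 F]
    (b : OrthonormalBasis κ 𝕜 E) (A : E →L[𝕜] F) : ‖A‖ ^ 2 ≤ ∑ i, ‖A (b i)‖ ^ 2 := by
  refine (Real.le_sqrt (norm_nonneg _) (by positivity)).1
    (A.opNorm_le_bound (Real.sqrt_nonneg _) fun w ↦ ?_)
  calc ‖A w‖ = ‖∑ i, b.repr w i • A (b i)‖ := by
        conv_lhs => rw [← b.sum_repr w, map_sum]
        simp only [map_smul]
    _ ≤ ∑ i, ‖A (b i)‖ * ‖b.repr w i‖ :=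
        norm_sum_le_of_le _ fun i _ ↦ by rw [norm_smul, mul_comm]
    _ ≤ √(∑ i, ‖A (b i)‖ ^ 2) * √(∑ i, ‖b.repr w i‖ ^ 2) :=
        Real.sum_mul_le_sqrt_mul_sqrt _ _ _
    _ = √(∑ i, ‖A (b i)‖ ^ 2) * ‖w‖ := by
        rw [← EuclideanSpace.norm_eq, b.repr.norm_map]

lemma integrable_norm_fderiv_apply_sq {E F : Type*} [NormedAddCommGroup E] [NormedSpace ℝ E]
    [MeasurableSpace E] [OpensMeasurableSpace E] {ν : Measure E} [IsFiniteMeasureOnCompacts ν]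
    [NormedAddCommGroup F] [NormedSpace ℝ F] {ψ : E → F} (hψ : ContDiff ℝ 1 ψ)
    (hsupp : HasCompactSupport ψ) (v : E) : Integrable (fun z ↦ ‖fderiv ℝ ψ z v‖ ^ 2) ν := by
  have hcont : Continuous fun z ↦ ‖fderiv ℝ ψ z v‖ ^ 2 :=
    ((hψ.continuous_fderiv one_ne_zero).clm_apply continuous_const).norm.pow 2
  exact hcont.integrable_of_hasCompactSupport
    ((hsupp.fderiv_apply ℝ v).comp_left (g := fun y ↦ ‖y‖ ^ 2) (by simp))

variable {ι κ F : Type*} [DecidableEq ι] [Fintype κ] [DecidableEq κ] [NormedAddCommGroup F]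

lemma det_toEuclideanCLM (A : Matrix κ κ ℝ) :
    (Matrix.toEuclideanCLM (𝕜 := ℝ) A).det = A.det := by
  rw [ContinuousLinearMap.det, Matrix.coe_toEuclideanCLM_eq_toEuclideanLin,
    Matrix.toEuclideanLin_eq_toLin_orthonormal, LinearMap.det_toLin]

lemma toEuclideanCLM_diagonal_single (a : κ → ℝ) (i : κ) :
    Matrix.toEuclideanCLM (𝕜 := ℝ) (Matrix.diagonal a) (EuclideanSpace.single i 1) =
      a i • EuclideanSpace.single i 1 := by
  ext j
  rcases eq_or_ne j i with rfl | hji <;> simp [Matrix.mulVec_diagonal, *]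

lemma norm_sq_particleFDeriv_comp_diagonal_le [NormedSpace ℝ F] (a : κ → ℝ)
    (ψ : (ι → EuclideanSpace ℝ κ) → F) (k : ι) (z : ι → EuclideanSpace ℝ κ) :
    ‖particleFDeriv ψ k z ∘L Matrix.toEuclideanCLM (𝕜 := ℝ) (Matrix.diagonal a)‖ ^ 2 ≤
      ∑ i, a i ^ 2 * ‖fderiv ℝ ψ z (Pi.single k (EuclideanSpace.single i 1))‖ ^ 2 := by
  refine (opNorm_sq_le_sum_norm_apply_sq (EuclideanSpace.basisFun κ ℝ) _).trans_eq ?_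
  simp only [particleFDeriv, EuclideanSpace.basisFun_apply, ContinuousLinearMap.comp_apply,
    toEuclideanCLM_diagonal_single, map_smul, norm_smul, mul_pow, Real.norm_eq_abs, sq_abs,
    ContinuousLinearMap.single_apply]

variable [Fintype ι]

/-- The energy `∑ i, (a i)² ‖∂_{k,i} ψ‖²` of the particle `k`, where `∂_{k,i}` is the derivative in
the `i`-th coordinate of its position and the norm is that of `L²`. The paper's energy
`‖∂_{x_k} ψ‖² + ε² ‖∇_{y_k} ψ‖²` has `a = (1, ε, ε)`. -/
noncomputable def weightedEnergy [NormedSpace ℝ F] (a : κ → ℝ)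
    (ψ : (ι → EuclideanSpace ℝ κ) → F) (k : ι) : ℝ :=
  ∑ i, a i ^ 2 * ∫ z, ‖fderiv ℝ ψ z (Pi.single k (EuclideanSpace.single i 1))‖ ^ 2

lemma weightedEnergy_nonneg [NormedSpace ℝ F] (a : κ → ℝ)
    (ψ : (ι → EuclideanSpace ℝ κ) → F) (k : ι) : 0 ≤ weightedEnergy a ψ k :=
  Finset.sum_nonneg fun _ _ ↦ mul_nonneg (sq_nonneg _) (integral_nonneg fun _ ↦ sq_nonneg _)

lemma eLpNorm_two_particleFDeriv_comp_diagonal_sq_le [NormedSpace ℝ F] (a : κ → ℝ)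
    {ψ : (ι → EuclideanSpace ℝ κ) → F} (hψ : ContDiff ℝ 1 ψ) (hsupp : HasCompactSupport ψ)
    (k : ι) :
    eLpNorm (fun z ↦ particleFDeriv ψ k z ∘L Matrix.toEuclideanCLM (𝕜 := ℝ) (Matrix.diagonal a)) 2
      volume ^ 2 ≤ ENNReal.ofReal (weightedEnergy a ψ k) := by
  have hint (i : κ) : Integrable fun z ↦
      a i ^ 2 * ‖fderiv ℝ ψ z (Pi.single k (EuclideanSpace.single i 1))‖ ^ 2 :=
    (integrable_norm_fderiv_apply_sq hψ hsupp _).const_mul _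
  have henergy : weightedEnergy a ψ k =
      ∫ z, ∑ i, a i ^ 2 * ‖fderiv ℝ ψ z (Pi.single k (EuclideanSpace.single i 1))‖ ^ 2 := by
    simp only [weightedEnergy, integral_finsetSum _ fun i _ ↦ hint i, integral_const_mul]
  have hlint := eLpNorm_nnreal_pow_eq_lintegral (μ := volume) (p := 2) (f := fun z ↦
    particleFDeriv ψ k z ∘L Matrix.toEuclideanCLM (𝕜 := ℝ) (Matrix.diagonal a)) two_ne_zero
  simp only [ENNReal.coe_ofNat, NNReal.coe_ofNat, ENNReal.rpow_ofNat] at hlint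
  rw [hlint, henergy, ofReal_integral_eq_lintegral_ofReal (integrable_finsetSum _ fun i _ ↦ hint i)
    (.of_forall fun z ↦ by positivity)]
  refine lintegral_mono fun z ↦ ?_
  rw [← ofReal_norm, ← ENNReal.ofReal_pow (norm_nonneg _)]
  exact ENNReal.ofReal_le_ofReal (norm_sq_particleFDeriv_comp_diagonal_le a ψ k z)

lemma weightedEnergy_fin_three [NormedSpace ℝ F] (ε : ℝ)
    {ψ : (ι → EuclideanSpace ℝ (Fin 3)) → F} (hψ : ContDiff ℝ 1 ψ) (hsupp : HasCompactSupport ψ)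
    (k : ι) :
    weightedEnergy ![1, ε, ε] ψ k =
      (∫ z, ‖fderiv ℝ ψ z (Pi.single k (EuclideanSpace.single 0 1))‖ ^ 2) +
        ε ^ 2 * ∫ z, (‖fderiv ℝ ψ z (Pi.single k (EuclideanSpace.single 1 1))‖ ^ 2 +
          ‖fderiv ℝ ψ z (Pi.single k (EuclideanSpace.single 2 1))‖ ^ 2) := by
  rw [integral_add (integrable_norm_fderiv_apply_sq hψ hsupp _)
    (integrable_norm_fderiv_apply_sq hψ hsupp _)]
  simp [weightedEnergy, Fin.sum_univ_three, mul_add, add_assoc]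

end WeightedEnergy

section NearCollisionEstimate

/-- The constant of the near-collision estimate in `ℝ^κ`: the Gagliardo–Nirenberg–Sobolev constant
for `p = 2` times `|B(0, 1)| ^ (1 / n)`, where `n` is the dimension. -/
noncomputable def nearCollisionConst (κ : Type*) [Fintype κ] : ℝ :=
  eLpNormLESNormFDerivOfEqInnerConst (volume : Measure (EuclideanSpace ℝ κ)) 2 *
    volume.real (Metric.ball (0 : EuclideanSpace ℝ κ) 1) ^ (Fintype.card κ : ℝ)⁻¹

lemma nearCollisionConst_nonneg (κ : Type*) [Fintype κ] : 0 ≤ nearCollisionConst κ := by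
  unfold nearCollisionConst; positivity

lemma nearCollision_coefficient_eq {κ : Type*} [Fintype κ] (hκ : Fintype.card κ ≠ 0) (D : ℝ)
    {r : ℝ} (hr : 0 < r) (m : ℕ) :
    eLpNormLESNormFDerivOfEqInnerConst (volume : Measure (EuclideanSpace ℝ κ)) 2 *
      (ENNReal.ofReal |D⁻¹| * (m * volume (Metric.ball (0 : EuclideanSpace ℝ κ) r))) ^
        (Fintype.card κ : ℝ)⁻¹ =
    ENNReal.ofReal (nearCollisionConst κ * ((m / |D|) ^ (Fintype.card κ : ℝ)⁻¹ * r)) := by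
  set n := Fintype.card κ
  have hmeasure :
      ENNReal.ofReal |D⁻¹| * (m * volume (Metric.ball (0 : EuclideanSpace ℝ κ) r)) =
        ENNReal.ofReal
          (volume.real (Metric.ball (0 : EuclideanSpace ℝ κ) 1) * (m / |D|) * r ^ n) := by
    rw [Measure.addHaar_ball_of_pos _ _ hr, finrank_euclideanSpace, ← ofReal_measureReal,
      ← ENNReal.ofReal_natCast, ← ENNReal.ofReal_mul (by positivity),
      ← ENNReal.ofReal_mul (by positivity), ← ENNReal.ofReal_mul (by positivity), abs_inv]
    congr 1
    ring
  rw [hmeasure, ENNReal.ofReal_rpow_of_nonneg (by positivity) (by positivity),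
    ← ENNReal.ofReal_coe_nnreal, ← ENNReal.ofReal_mul (by positivity),
    Real.mul_rpow (by positivity) (by positivity), Real.mul_rpow (by positivity) (by positivity),
    Real.pow_rpow_inv_natCast hr.le hκ, nearCollisionConst]
  congr 1
  ring

variable {ι κ F : Type*} [Fintype ι] [DecidableEq ι] [Fintype κ] [DecidableEq κ]
  [NormedAddCommGroup F] [InnerProductSpace ℝ F] {a : κ → ℝ}
  {ψ : (ι → EuclideanSpace ℝ κ) → F}

theorem sqrt_setIntegral_nearCollisionSet_le (hκ : 2 < Fintype.card κ) (ha : ∀ i, a i ≠ 0)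
    (hψ : ContDiff ℝ 1 ψ) (hsupp : HasCompactSupport ψ) (T : Finset ι) {r : ℝ} (hr : 0 < r) :
    √(∫ z in nearCollisionSet T r, ‖ψ z‖ ^ 2) ≤
      nearCollisionConst κ * ((T.card / |∏ i, a i|) ^ (Fintype.card κ : ℝ)⁻¹ * r) *
        √(∑ k ∈ T, weightedEnergy a ψ k) := by
  set K := nearCollisionConst κ * ((T.card / |∏ i, a i|) ^ (Fintype.card κ : ℝ)⁻¹ * r) with hK
  have hK0 : 0 ≤ K := mul_nonneg (nearCollisionConst_nonneg κ) (by positivity)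
  have hdet : (Matrix.toEuclideanCLM (𝕜 := ℝ) (Matrix.diagonal a)).det = ∏ i, a i := by
    rw [det_toEuclideanCLM, Matrix.det_diagonal]
  have hcollision := eLpNorm_restrict_nearCollisionSet_rpow_le
    (volume : Measure (EuclideanSpace ℝ κ)) (hdet ▸ Finset.prod_ne_zero_iff.2 fun i _ ↦ ha i) hψ
    hsupp (p := 2) one_le_two (by simpa using mod_cast hκ) T r
  simp only [hdet, finrank_euclideanSpace, ENNReal.coe_ofNat, NNReal.coe_ofNat,
    ENNReal.rpow_ofNat, ← volume_pi] at hcollision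
  rw [nearCollision_coefficient_eq (by omega) _ hr] at hcollision
  have hsq : eLpNorm ψ 2 (volume.restrict (nearCollisionSet T r)) ^ 2 ≤
      ENNReal.ofReal (K ^ 2 * ∑ k ∈ T, weightedEnergy a ψ k) := by
    refine hcollision.trans ?_
    rw [ENNReal.ofReal_mul (sq_nonneg K), ENNReal.ofReal_pow hK0,
      ENNReal.ofReal_sum_of_nonneg fun k _ ↦ weightedEnergy_nonneg a ψ k]
    gcongr with k
    exact eLpNorm_two_particleFDeriv_comp_diagonal_sq_le a hψ hsupp k
  have hintegral : ∫ z in nearCollisionSet T r, ‖ψ z‖ ^ 2 =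
      (eLpNorm ψ 2 (volume.restrict (nearCollisionSet T r)) ^ 2).toReal := by
    have hlint := eLpNorm_nnreal_pow_eq_lintegral (f := ψ) (p := 2)
      (μ := volume.restrict (nearCollisionSet T r)) two_ne_zero
    simp only [ENNReal.coe_ofNat, NNReal.coe_ofNat, ENNReal.rpow_ofNat] at hlint
    rw [hlint, integral_eq_lintegral_of_nonneg_ae (.of_forall fun _ ↦ sq_nonneg _)
      (hψ.continuous.norm.pow 2).aestronglyMeasurable]
    simp only [ENNReal.ofReal_pow (norm_nonneg _), ofReal_norm]
  have henergy0 : 0 ≤ ∑ k ∈ T, weightedEnergy a ψ k :=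
    Finset.sum_nonneg fun k _ ↦ weightedEnergy_nonneg a ψ k
  calc √(∫ z in nearCollisionSet T r, ‖ψ z‖ ^ 2)
      ≤ √(K ^ 2 * ∑ k ∈ T, weightedEnergy a ψ k) := Real.sqrt_le_sqrt <| by
        rw [hintegral]
        exact ENNReal.toReal_le_of_le_ofReal (by positivity) hsq
    _ = K * √(∑ k ∈ T, weightedEnergy a ψ k) := by
        rw [Real.sqrt_mul (sq_nonneg K), Real.sqrt_sq hK0]

theorem other_particles_neighbourhood_bound_general.{u, v} {κ : Type*} [Fintype κ] [DecidableEq κ]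
    (hκ : 2 < Fintype.card κ) :
    ∃ C > (0 : ℝ), ∀ {ι : Type u} [Fintype ι] [DecidableEq ι] [Nonempty ι] {F : Type v}
      [NormedAddCommGroup F] [InnerProductSpace ℝ F] (T : Finset ι) {a : κ → ℝ},
      (∀ i, a i ≠ 0) → ∀ (d : ℝ) {ψ : (ι → EuclideanSpace ℝ κ) → F}, ContDiff ℝ 1 ψ →
        HasCompactSupport ψ →
        √(∫ z in nearCollisionSet T ((|∏ i, a i| / Fintype.card ι) ^ d), ‖ψ z‖ ^ 2) ≤
          C * (|∏ i, a i| / Fintype.card ι) ^ (d - 1 / Fintype.card κ) *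
            √(∑ k ∈ T, weightedEnergy a ψ k) := by
  have hC := nearCollisionConst_nonneg κ
  refine ⟨nearCollisionConst κ + 1, by positivity, fun {ι} _ _ _ {F} _ _ T a ha d ψ hψ hsupp ↦ ?_⟩
  set D := |∏ i, a i|
  have hD : 0 < D := abs_pos.2 (Finset.prod_ne_zero_iff.2 fun i _ ↦ ha i)
  have hμ : 0 < D / Fintype.card ι := by positivity
  have hexp : (T.card / D) ^ (Fintype.card κ : ℝ)⁻¹ * (D / Fintype.card ι) ^ d ≤
      (D / Fintype.card ι) ^ (d - 1 / Fintype.card κ) := by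
    rw [sub_eq_neg_add, Real.rpow_add hμ, one_div, Real.rpow_neg hμ.le, ← Real.inv_rpow hμ.le,
      inv_div]
    gcongr
    exact T.card_le_univ
  refine (sqrt_setIntegral_nearCollisionSet_le hκ ha hψ hsupp T (by positivity)).trans ?_
  gcongr
  exact le_add_of_nonneg_right zero_le_one

end NearCollisionEstimate

/-- There is a universal constant `C` such that for every `N ≥ 2`, `ε ∈ (0,1]`, `μ := ε²/N`,
`d > 1/3`, and every smooth compactly supported `ψ` on `(ℝ³)^N`, with
`B̄₁ := {z : |z_k - z_l| < μ^d for some k ≠ l, both ≠ 1}`: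
`‖1_{B̄₁} ψ‖ ≤ C μ^(d - 1/3) (∑_{k=2}^N (‖∂_{x_k}ψ‖² + ε² ‖∇_{y_k}ψ‖²))^(1/2)`. -/
theorem other_particles_neighbourhood_bound :
    ∃ C > (0:ℝ), ∀ N : ℕ, ∀ hN : 2 ≤ N, ∀ ε : ℝ, ε ∈ Set.Ioc (0:ℝ) 1 →
      ∀ d : ℝ, 1/3 < d →
      ∀ ψ : (Fin N → EuclideanSpace ℝ (Fin 3)) → ℂ, ContDiff ℝ (⊤ : ℕ∞) ψ → HasCompactSupport ψ →
        Real.sqrt (∫ z in {z : Fin N → EuclideanSpace ℝ (Fin 3) |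
            ∃ k l : Fin N, k ≠ ⟨0, by omega⟩ ∧ l ≠ ⟨0, by omega⟩ ∧ k ≠ l ∧
              ‖z k - z l‖ < (ε ^ 2 / N) ^ d}, ‖ψ z‖ ^ 2) ≤
          C * (ε ^ 2 / N) ^ (d - 1/3) *
            Real.sqrt (∑ k ∈ Finset.univ.filter (fun k : Fin N => k ≠ ⟨0, by omega⟩),
              ((∫ z : Fin N → EuclideanSpace ℝ (Fin 3),
                  ‖fderiv ℝ ψ z (Pi.single k (EuclideanSpace.single (0 : Fin 3) (1:ℝ)))‖ ^ 2) +
                ε ^ 2 * ∫ z : Fin N → EuclideanSpace ℝ (Fin 3),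
                  (‖fderiv ℝ ψ z (Pi.single k (EuclideanSpace.single (1 : Fin 3) (1:ℝ)))‖ ^ 2 +
                    ‖fderiv ℝ ψ z (Pi.single k (EuclideanSpace.single (2 : Fin 3) (1:ℝ)))‖ ^ 2))) := by
  obtain ⟨C, hC, hbound⟩ := other_particles_neighbourhood_bound_general (κ := Fin 3) (by simp)
  refine ⟨C, hC, fun N hN ε ⟨hε, _⟩ d _ ψ hψ hsupp ↦ ?_⟩
  have : Nonempty (Fin N) := ⟨0, by omega⟩
  have hψ₁ : ContDiff ℝ 1 ψ := hψ.of_le (by exact_mod_cast le_top)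
  have hcoupling : |∏ i, ![1, ε, ε] i| = ε ^ 2 := by simp [Fin.prod_univ_three, sq]
  have h := hbound (Finset.univ.filter (· ≠ ⟨0, by omega⟩)) (a := ![1, ε, ε])
    (by simp [Fin.forall_fin_succ, hε.ne']) d hψ₁ hsupp
  simpa [nearCollisionSet, hcoupling, weightedEnergy_fin_three ε hψ₁ hsupp] using h
end

section
/- There is a constant C depending only on a and ‖w‖_{L^∞} such that the radial derivative of g_β, namely g_β'(r) := d/dr [1 − f̃(r)/r], satisfies |g_β'(r)| ≤ C/r for 0 < r ≤ μ and |g_β'(r)| ≤ C ( μ^{1−β̃}/r + μ/r² ) for μ ≤ r ≤ R_β. -/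
open Set

/-- The radial scattering data: the rescaled interaction `w_μ(r) = μ⁻² w(r/μ)` (given through its
radial profile `w`), its zero-energy scattering solution `j̃` in radial form, and for each `κ ≥ 1`
the function `f̃_κ` which equals `κ j̃` on `[0, μ^β̃]` and solves
`f̃_κ'' = -½ a μ^(1-3β̃) f̃_κ` beyond `μ^β̃`. -/
structure ScatteringODE where
  a : ℝ
  beta : ℝ
  mu : ℝ
  w : ℝ → ℝ
  jt : ℝ → ℝ
  jt' : ℝ → ℝ
  ft : ℝ → ℝ → ℝ
  ft' : ℝ → ℝ → ℝ
  ha : 0 < a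
  hbeta : beta ∈ Set.Ioo (1/3 : ℝ) 1
  hmu : mu ∈ Set.Ioo (0 : ℝ) 1
  hw_nonneg : ∀ r, 0 ≤ w r
  hw_bdd : ∃ M, ∀ r, w r ≤ M
  hw_supp : ∀ r, 1 < r → w r = 0
  hjt_deriv : ∀ r, HasDerivAt jt (jt' r) r
  hjt_zero : jt 0 = 0
  hjt_ode : ∀ r ∈ Set.Ioo 0 mu, HasDerivAt jt' ((1/2) * (mu⁻¹ ^ 2 * w (r / mu)) * jt r) r
  hjt_lin : ∀ r, mu ≤ r → jt r = r - mu * a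
  hjt_nonneg : ∀ r, 0 ≤ r → 0 ≤ jt r
  hjt_mono : MonotoneOn jt (Set.Ici 0)
  hjt_le : ∀ r, 0 ≤ r → jt r ≤ r
  hft_deriv : ∀ κ r : ℝ, HasDerivAt (ft κ) (ft' κ r) r
  hft_eq : ∀ κ : ℝ, ∀ r ∈ Set.Icc (0:ℝ) (mu ^ beta), ft κ r = κ * jt r
  hft_ode : ∀ κ r : ℝ, mu ^ beta < r →
      HasDerivAt (ft' κ) (-(1/2) * a * mu ^ (1 - 3 * beta) * ft κ r) r

/-- A scattering setup together with the tangency parameter `κ_β ∈ (1, μ^β̃/(μ^β̃ - μa))` and the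
minimal tangency radius `R_β ∈ (μ^β̃, ∞)` at which `f̃_{κ_β}` is tangent to the line `r ↦ r`. -/
structure TangentScattering extends ScatteringODE where
  hsmall : mu * a < mu ^ beta
  kappa : ℝ
  Rb : ℝ
  hkappa : kappa ∈ Set.Ioo 1 (mu ^ beta / (mu ^ beta - mu * a))
  hRb : mu ^ beta < Rb
  htan_val : ft kappa Rb = Rb
  htan_der : ft' kappa Rb = 1
  hRb_min : ∀ R : ℝ, mu ^ beta < R → ft kappa R = R → ft' kappa R = 1 → Rb ≤ R

/-- The radial form `f̃` of the scattering solution `f_β`, extended by `f̃(r) = r` for `r ≥ R_β`. -/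
noncomputable def TangentScattering.fext (S : TangentScattering) (r : ℝ) : ℝ :=
  if r < S.Rb then S.ft S.kappa r else r

/-!
The derivative of `1 - f̃(r)/r` is `(f̃(r) - r f̃'(r))/r²`, whose numerator is the intercept at `0`
of the tangent line to `f̃` at `r`. Inside `μ` the intercept is at most `κ r` in absolute value,
because `j̃` and `r j̃'` both lie between `0` and `r`. Between `μ` and `μ^β̃` it equals `-κ μ a`.
Beyond `μ^β̃` it vanishes at `R_β` by tangency, and its derivative `-r f̃''(r)` is of size
`μ^(1-3β̃) r²`, so that it is of size `μ^(1-β̃) r`.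

All of this needs a bound on `κ` and on `f̃'`. The energy `f̃'² + ½ a μ^(1-3β̃) f̃²` is conserved
beyond `μ^β̃`, and its value at `R_β` is of order one.
-/

theorem hasDerivAt_eq_of_eqOn {𝕜 F : Type*} [NontriviallyNormedField 𝕜] [NormedAddCommGroup F]
    [NormedSpace 𝕜 F] {f g : 𝕜 → F} {f' g' : F} {s : Set 𝕜} {x : 𝕜} (hf : HasDerivAt f f' x)
    (hg : HasDerivAt g g' x) (hfg : EqOn f g s) (hx : x ∈ s) (hs : UniqueDiffWithinAt 𝕜 s x) :
    f' = g' :=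
  hs.eq_deriv s hf.hasDerivWithinAt (hg.hasDerivWithinAt.congr hfg (hfg hx))

theorem hasDerivAt_ite_lt {F : Type*} [NormedAddCommGroup F] [NormedSpace ℝ F] {f g : ℝ → F}
    {f' : F} {x : ℝ} (hf : HasDerivAt f f' x) (hg : HasDerivAt g f' x) (hfg : f x = g x) :
    HasDerivAt (fun t => if t < x then f t else g t) f' x := by
  have hleft : HasDerivWithinAt (fun t => if t < x then f t else g t) f' (Iio x) x :=
    hf.hasDerivWithinAt.congr (fun _ ht => if_pos ht) (by simp [hfg])
  have hright : HasDerivWithinAt (fun t => if t < x then f t else g t) f' (Ici x) x :=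
    hg.hasDerivWithinAt.congr (fun _ ht => if_neg (not_lt.2 ht)) (by simp)
  simpa only [Iio_union_Ici, hasDerivWithinAt_univ] using hleft.union hright

/-- No continuity of `f'` at `a` is required: derivatives have the Darboux property. -/
theorem hasDerivWithinAt_left_le {f f' : ℝ → ℝ} {a b M : ℝ} (hab : a < b)
    (hf : ∀ x ∈ Icc a b, HasDerivWithinAt f (f' x) (Icc a b) x)
    (hM : ∀ x ∈ Ioc a b, f' x ≤ M) : f' a ≤ M := by
  by_contra! h
  obtain ⟨m, hMm, hma⟩ := exists_between h
  obtain ⟨c, hc, rfl⟩ := exists_hasDerivWithinAt_eq_of_lt_of_gt hab.le hf hma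
    ((hM b ⟨hab, le_rfl⟩).trans_lt hMm)
  exact (hM c (Ioo_subset_Ioc_self hc)).not_gt hMm

theorem harmonicOscillator_energy_eq {f f' : ℝ → ℝ} {k x y : ℝ} {s : Set ℝ} (hs : Convex ℝ s)
    (hf : ∀ t ∈ s, HasDerivWithinAt f (f' t) s t)
    (hf' : ∀ t ∈ s, HasDerivWithinAt f' (-k * f t) s t) (hx : x ∈ s) (hy : y ∈ s) :
    f' x ^ 2 + k * f x ^ 2 = f' y ^ 2 + k * f y ^ 2 := by
  have hderiv : ∀ t ∈ s, HasDerivWithinAt (fun t => f' t ^ 2 + k * f t ^ 2) 0 s t := by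
    intro t ht
    refine (((hf' t ht).pow 2).add (((hf t ht).pow 2).const_mul k)).congr_deriv ?_
    push_cast
    ring
  have hconst := hs.norm_image_sub_le_of_norm_hasDerivWithin_le hderiv
    (fun _ _ => norm_zero.le) hy hx
  rw [zero_mul] at hconst
  exact sub_eq_zero.1 (norm_le_zero_iff.1 hconst)

/-- The intercept at `0` of the tangent line at `t` to the graph of a function `f` with derivative
`f'`. It is the numerator of the derivative of `1 - f t / t`. -/
def tangentIntercept {𝕜 : Type*} [Ring 𝕜] (f f' : 𝕜 → 𝕜) (t : 𝕜) : 𝕜 := f t - t * f' t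

theorem hasDerivAt_one_sub_div_self {𝕜 : Type*} [NontriviallyNormedField 𝕜] {f f' : 𝕜 → 𝕜} {x : 𝕜}
    (hf : HasDerivAt f (f' x) x) (hx : x ≠ 0) :
    HasDerivAt (fun t => 1 - f t / t) (tangentIntercept f f' x / x ^ 2) x := by
  refine ((hf.div (hasDerivAt_id x) hx).const_sub 1).congr_deriv ?_
  simp only [tangentIntercept, id]
  ring

theorem hasDerivWithinAt_tangentIntercept {𝕜 : Type*} [NontriviallyNormedField 𝕜] {f f' : 𝕜 → 𝕜}
    {f'' x : 𝕜} {s : Set 𝕜} (hf : HasDerivWithinAt f (f' x) s x)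
    (hf' : HasDerivWithinAt f' f'' s x) :
    HasDerivWithinAt (tangentIntercept f f') (-(x * f'')) s x := by
  refine (hf.sub ((hasDerivWithinAt_id x s).mul hf')).congr_deriv ?_
  simp only [id]
  ring

theorem abs_tangentIntercept_sub_le {f f' f'' : ℝ → ℝ} {s : Set ℝ} {x y B : ℝ} (hs : Convex ℝ s)
    (hf : ∀ t ∈ s, HasDerivWithinAt f (f' t) s t) (hf' : ∀ t ∈ s, HasDerivWithinAt f' (f'' t) s t)
    (hB : ∀ t ∈ s, |t * f'' t| ≤ B) (hx : x ∈ s) (hy : y ∈ s) :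
    |tangentIntercept f f' y - tangentIntercept f f' x| ≤ B * |y - x| :=
  hs.norm_image_sub_le_of_norm_hasDerivWithin_le
    (fun t ht => hasDerivWithinAt_tangentIntercept (hf t ht) (hf' t ht))
    (fun t ht => (norm_neg _).trans_le (hB t ht)) hx hy

namespace ScatteringODE

variable (S : ScatteringODE)

theorem mu_pos : 0 < S.mu := S.hmu.1

theorem rpow_beta_pos : 0 < S.mu ^ S.beta := Real.rpow_pos_of_pos S.mu_pos _

theorem mu_lt_rpow_beta : S.mu < S.mu ^ S.beta := by
  simpa using Real.rpow_lt_rpow_of_exponent_gt S.mu_pos S.hmu.2 S.hbeta.2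

theorem jt'_eq_one {r : ℝ} (hr : S.mu ≤ r) : S.jt' r = 1 :=
  hasDerivAt_eq_of_eqOn (S.hjt_deriv r) ((hasDerivAt_id r).sub_const (S.mu * S.a))
    (fun t ht => S.hjt_lin t (hr.trans ht)) self_mem_Ici (uniqueDiffOn_Ici r r self_mem_Ici)

theorem jt'_nonneg {r : ℝ} (hr : 0 ≤ r) : 0 ≤ S.jt' r := by
  rw [← (S.hjt_deriv r).hasDerivWithinAt.derivWithin (uniqueDiffOn_Ici (0 : ℝ) r hr)]
  exact S.hjt_mono.derivWithin_nonneg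

theorem convexOn_jt : ConvexOn ℝ (Icc 0 S.mu) S.jt := by
  refine convexOn_of_hasDerivWithinAt2_nonneg
    (f'' := fun r => 1 / 2 * (S.mu⁻¹ ^ 2 * S.w (r / S.mu)) * S.jt r) (convex_Icc _ _)
    (fun r _ => (S.hjt_deriv r).continuousAt.continuousWithinAt)
    (fun r _ => (S.hjt_deriv r).hasDerivWithinAt) ?_ ?_ <;> rw [interior_Icc]
  · exact fun r hr => (S.hjt_ode r hr).hasDerivWithinAt
  · intro r hr
    have := S.hw_nonneg (r / S.mu)
    have := S.hjt_nonneg r hr.1.le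
    positivity

theorem jt'_le_one {r : ℝ} (hr : 0 ≤ r) : S.jt' r ≤ 1 := by
  rcases le_total S.mu r with h | h
  · exact (S.jt'_eq_one h).le
  · have hmono := S.convexOn_jt.monotoneOn_deriv fun t _ => (S.hjt_deriv t).differentiableAt
    rw [← S.jt'_eq_one le_rfl, ← (S.hjt_deriv r).deriv, ← (S.hjt_deriv S.mu).deriv]
    exact hmono ⟨hr, h⟩ ⟨S.mu_pos.le, le_rfl⟩ h

theorem ft'_eq_mul_jt' (κ : ℝ) {r : ℝ} (hr : r ∈ Icc 0 (S.mu ^ S.beta)) :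
    S.ft' κ r = κ * S.jt' r :=
  hasDerivAt_eq_of_eqOn (S.hft_deriv κ r) ((S.hjt_deriv r).const_mul κ) (S.hft_eq κ) hr
    (uniqueDiffOn_Icc S.rpow_beta_pos r hr)

theorem tangentIntercept_ft_eq_mul (κ : ℝ) {r : ℝ} (hr : r ∈ Icc 0 (S.mu ^ S.beta)) :
    tangentIntercept (S.ft κ) (S.ft' κ) r = κ * tangentIntercept S.jt S.jt' r := by
  simp only [tangentIntercept, S.hft_eq κ r hr, S.ft'_eq_mul_jt' κ hr]
  ring

theorem abs_tangentIntercept_jt_le {r : ℝ} (hr : 0 ≤ r) :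
    |tangentIntercept S.jt S.jt' r| ≤ r :=
  abs_sub_le_of_nonneg_of_le (S.hjt_nonneg r hr) (S.hjt_le r hr)
    (mul_nonneg hr (S.jt'_nonneg hr)) (mul_le_of_le_one_right hr (S.jt'_le_one hr))

theorem tangentIntercept_jt_eq {r : ℝ} (hr : S.mu ≤ r) :
    tangentIntercept S.jt S.jt' r = -(S.mu * S.a) := by
  rw [tangentIntercept, S.hjt_lin r hr, S.jt'_eq_one hr]
  ring

/-- The spring constant `½ a μ^(1-3β̃)` of the harmonic oscillator equation that `f̃_κ` satisfies
beyond `μ^β̃`. -/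
noncomputable def springConst : ℝ := 1 / 2 * S.a * S.mu ^ (1 - 3 * S.beta)

theorem springConst_pos : 0 < S.springConst :=
  mul_pos (mul_pos one_half_pos S.ha) (Real.rpow_pos_of_pos S.mu_pos _)

theorem springConst_mul_sq :
    S.springConst * (S.mu ^ S.beta) ^ 2 = 1 / 2 * S.a * S.mu ^ (1 - S.beta) := by
  rw [springConst, mul_assoc, ← Real.rpow_mul_natCast S.mu_pos.le, ← Real.rpow_add S.mu_pos]
  congr 2
  push_cast
  ring

theorem hasDerivAt_ft' (κ : ℝ) {r : ℝ} (hr : S.mu ^ S.beta < r) :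
    HasDerivAt (S.ft' κ) (-S.springConst * S.ft κ r) r :=
  (S.hft_ode κ r hr).congr_deriv (by rw [springConst]; ring)

end ScatteringODE

namespace TangentScattering

variable (S : TangentScattering)

theorem kappa_pos : 0 < S.kappa := one_pos.trans S.hkappa.1

theorem Rb_pos : 0 < S.Rb := S.rpow_beta_pos.trans S.hRb

theorem a_mul_rpow_lt_one : S.a * S.mu ^ (1 - S.beta) < 1 := by
  rw [Real.rpow_sub S.mu_pos, Real.rpow_one, ← mul_div_assoc, div_lt_one S.rpow_beta_pos, mul_comm]
  exact S.hsmall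

theorem hasDerivAt_fext {r : ℝ} (hr : r ≤ S.Rb) : HasDerivAt S.fext (S.ft' S.kappa r) r := by
  rcases hr.eq_or_lt with rfl | hr
  · rw [S.htan_der]
    exact hasDerivAt_ite_lt (S.htan_der ▸ S.hft_deriv S.kappa S.Rb) (hasDerivAt_id _) S.htan_val
  · refine (S.hft_deriv S.kappa r).congr_of_eventuallyEq ?_
    filter_upwards [Iio_mem_nhds hr] with t ht using if_pos ht

theorem fext_eq_ft {r : ℝ} (hr : r ≤ S.Rb) : S.fext r = S.ft S.kappa r := by
  rcases hr.eq_or_lt with rfl | hr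
  · exact (if_neg (lt_irrefl _)).trans S.htan_val.symm
  · exact if_pos hr

theorem deriv_one_sub_fext_div {r : ℝ} (h0 : 0 < r) (hr : r ≤ S.Rb) :
    deriv (fun t => 1 - S.fext t / t) r =
      tangentIntercept (S.ft S.kappa) (S.ft' S.kappa) r / r ^ 2 := by
  rw [(hasDerivAt_one_sub_div_self (S.hasDerivAt_fext hr) h0.ne').deriv, tangentIntercept,
    S.fext_eq_ft hr, tangentIntercept]

/-- The square root of the energy `f̃'² + ½ a μ^(1-3β̃) f̃²` at the tangency radius, which dominates
the slope of `f̃` on all of `[0, R_β]`. -/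
noncomputable def slopeBound : ℝ := √(1 + S.springConst * S.Rb ^ 2)

theorem slopeBound_nonneg : 0 ≤ S.slopeBound := Real.sqrt_nonneg _

theorem abs_ft'_le_slopeBound_of_lt {r : ℝ} (hr : S.mu ^ S.beta < r) :
    |S.ft' S.kappa r| ≤ S.slopeBound := by
  refine Real.abs_le_sqrt ?_
  calc S.ft' S.kappa r ^ 2
      ≤ S.ft' S.kappa r ^ 2 + S.springConst * S.ft S.kappa r ^ 2 :=
        le_add_of_nonneg_right (mul_nonneg S.springConst_pos.le (sq_nonneg _))
    _ = S.ft' S.kappa S.Rb ^ 2 + S.springConst * S.ft S.kappa S.Rb ^ 2 :=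
        harmonicOscillator_energy_eq (convex_Ioi (S.mu ^ S.beta))
          (fun t _ => (S.hft_deriv _ t).hasDerivWithinAt)
          (fun t ht => (S.hasDerivAt_ft' _ ht).hasDerivWithinAt) hr S.hRb
    _ = 1 + S.springConst * S.Rb ^ 2 := by rw [S.htan_der, S.htan_val, one_pow]

theorem kappa_le_slopeBound : S.kappa ≤ S.slopeBound := by
  have hslope : S.ft' S.kappa (S.mu ^ S.beta) = S.kappa := by
    rw [S.ft'_eq_mul_jt' _ ⟨S.rpow_beta_pos.le, le_rfl⟩, S.jt'_eq_one S.mu_lt_rpow_beta.le, mul_one]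
  rw [← hslope]
  exact hasDerivWithinAt_left_le S.hRb (fun t _ => (S.hft_deriv _ t).hasDerivWithinAt)
    fun t ht => (le_abs_self _).trans (S.abs_ft'_le_slopeBound_of_lt ht.1)

theorem abs_ft'_le_slopeBound {r : ℝ} (hr : 0 ≤ r) : |S.ft' S.kappa r| ≤ S.slopeBound := by
  rcases lt_or_ge (S.mu ^ S.beta) r with h | h
  · exact S.abs_ft'_le_slopeBound_of_lt h
  · have hj := S.jt'_nonneg hr
    rw [S.ft'_eq_mul_jt' _ ⟨hr, h⟩, abs_of_nonneg (mul_nonneg S.kappa_pos.le hj)]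
    exact (mul_le_of_le_one_right S.kappa_pos.le (S.jt'_le_one hr)).trans S.kappa_le_slopeBound

theorem abs_ft_le_slopeBound_mul {r : ℝ} (hr : 0 ≤ r) :
    |S.ft S.kappa r| ≤ S.slopeBound * r := by
  have hzero : S.ft S.kappa 0 = 0 := by
    rw [S.hft_eq _ 0 ⟨le_rfl, S.rpow_beta_pos.le⟩, S.hjt_zero, mul_zero]
  have h := (convex_Ici (0 : ℝ)).norm_image_sub_le_of_norm_hasDerivWithin_le
    (fun t _ => (S.hft_deriv S.kappa t).hasDerivWithinAt)
    (fun t ht => S.abs_ft'_le_slopeBound ht) self_mem_Ici hr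
  rwa [hzero, sub_zero, sub_zero, Real.norm_eq_abs, Real.norm_eq_abs, abs_of_nonneg hr] at h

theorem abs_tangentIntercept_ft_le_of_le_mu {r : ℝ} (h0 : 0 ≤ r) (hr : r ≤ S.mu) :
    |tangentIntercept (S.ft S.kappa) (S.ft' S.kappa) r| ≤ S.slopeBound * r := by
  rw [S.tangentIntercept_ft_eq_mul _ ⟨h0, hr.trans S.mu_lt_rpow_beta.le⟩, abs_mul,
    abs_of_pos S.kappa_pos]
  exact mul_le_mul S.kappa_le_slopeBound (S.abs_tangentIntercept_jt_le h0) (abs_nonneg _)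
    S.slopeBound_nonneg

theorem abs_tangentIntercept_ft_le_of_mem_Icc {r : ℝ} (hr : r ∈ Icc S.mu (S.mu ^ S.beta)) :
    |tangentIntercept (S.ft S.kappa) (S.ft' S.kappa) r| ≤ S.slopeBound * (S.mu * S.a) := by
  have hμa : 0 < S.mu * S.a := mul_pos S.mu_pos S.ha
  rw [S.tangentIntercept_ft_eq_mul _ ⟨S.mu_pos.le.trans hr.1, hr.2⟩, S.tangentIntercept_jt_eq hr.1,
    abs_mul, abs_neg, abs_of_pos S.kappa_pos, abs_of_pos hμa]
  exact mul_le_mul_of_nonneg_right S.kappa_le_slopeBound hμa.le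

theorem abs_tangentIntercept_ft_le_of_rpow_lt {r : ℝ} (hr : S.mu ^ S.beta < r) (hR : r ≤ S.Rb) :
    |tangentIntercept (S.ft S.kappa) (S.ft' S.kappa) r| ≤
      S.slopeBound * (S.springConst * S.Rb ^ 2) * (S.Rb - r) := by
  have htangent : tangentIntercept (S.ft S.kappa) (S.ft' S.kappa) S.Rb = 0 := by
    rw [tangentIntercept, S.htan_val, S.htan_der, mul_one, sub_self]
  have hk := S.springConst_pos
  have hbound : ∀ t ∈ Icc r S.Rb, |t * (-S.springConst * S.ft S.kappa t)| ≤
      S.slopeBound * (S.springConst * S.Rb ^ 2) := by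
    intro t ht
    have ht0 : 0 ≤ t := (S.rpow_beta_pos.trans (hr.trans_le ht.1)).le
    have hK := S.slopeBound_nonneg
    have hR0 := S.Rb_pos
    have htR := ht.2
    calc |t * (-S.springConst * S.ft S.kappa t)|
        = t * (S.springConst * |S.ft S.kappa t|) := by
          rw [abs_mul, abs_mul, abs_neg, abs_of_nonneg ht0, abs_of_pos hk]
      _ ≤ S.Rb * (S.springConst * (S.slopeBound * S.Rb)) := by
          gcongr
          exact (S.abs_ft_le_slopeBound_mul ht0).trans (by gcongr)
      _ = S.slopeBound * (S.springConst * S.Rb ^ 2) := by ring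
  have h := abs_tangentIntercept_sub_le (convex_Icc r S.Rb)
    (fun t _ => (S.hft_deriv S.kappa t).hasDerivWithinAt)
    (fun t ht => (S.hasDerivAt_ft' S.kappa (hr.trans_le ht.1)).hasDerivWithinAt) hbound
    (right_mem_Icc.2 hR) (left_mem_Icc.2 hR)
  rwa [htangent, sub_zero, abs_sub_comm, abs_of_nonneg (sub_nonneg.2 hR)] at h

variable {S} {C : ℝ}

theorem pos_of_Rb_le (hC : S.Rb ≤ C * S.mu ^ S.beta) : 0 < C :=
  pos_of_mul_pos_left (S.Rb_pos.trans_le hC) S.rpow_beta_pos.le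

theorem springConst_mul_Rb_sq_le (hC : S.Rb ≤ C * S.mu ^ S.beta) :
    S.springConst * S.Rb ^ 2 ≤ C ^ 2 * (S.a * S.mu ^ (1 - S.beta)) := by
  have hk := S.springConst_pos
  have hR := S.Rb_pos
  have ha := S.ha
  have hμ := S.mu_pos
  calc S.springConst * S.Rb ^ 2
      ≤ S.springConst * (C * S.mu ^ S.beta) ^ 2 := by gcongr
    _ = 1 / 2 * (C ^ 2 * (S.a * S.mu ^ (1 - S.beta))) := by
        rw [mul_pow, mul_left_comm, S.springConst_mul_sq]
        ring
    _ ≤ C ^ 2 * (S.a * S.mu ^ (1 - S.beta)) :=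
        mul_le_of_le_one_left (by positivity) (by norm_num)

theorem slopeBound_le (hC : S.Rb ≤ C * S.mu ^ S.beta) : S.slopeBound ≤ 1 + C := by
  have hC0 := pos_of_Rb_le hC
  have hk : S.springConst * S.Rb ^ 2 ≤ C ^ 2 := (springConst_mul_Rb_sq_le hC).trans
    (mul_le_of_le_one_right (sq_nonneg C) S.a_mul_rpow_lt_one.le)
  exact Real.sqrt_le_iff.2 ⟨by positivity, by nlinarith⟩

theorem abs_tangentIntercept_ft_le (hC : S.Rb ≤ C * S.mu ^ S.beta) {r : ℝ} (hr : S.mu ≤ r)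
    (hR : r ≤ S.Rb) :
    |tangentIntercept (S.ft S.kappa) (S.ft' S.kappa) r| ≤
      (1 + C) * S.a * (C ^ 3 * (S.mu ^ (1 - S.beta) * r) + S.mu) := by
  have hC0 := pos_of_Rb_le hC
  have hK := slopeBound_le hC
  have ha := S.ha
  have hμ := S.mu_pos
  have hr0 : 0 < r := hμ.trans_le hr
  rcases le_or_gt r (S.mu ^ S.beta) with h | h
  · calc _ ≤ S.slopeBound * (S.mu * S.a) := S.abs_tangentIntercept_ft_le_of_mem_Icc ⟨hr, h⟩
      _ ≤ (1 + C) * (S.mu * S.a) := by gcongr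
      _ = (1 + C) * S.a * (0 + S.mu) := by ring
      _ ≤ _ := by gcongr; positivity
  · have hk := S.springConst_pos
    have hlength : S.Rb - r ≤ C * r :=
      (sub_le_self _ hr0.le).trans (hC.trans (by gcongr))
    calc _ ≤ S.slopeBound * (S.springConst * S.Rb ^ 2) * (S.Rb - r) :=
          S.abs_tangentIntercept_ft_le_of_rpow_lt h hR
      _ ≤ (1 + C) * (C ^ 2 * (S.a * S.mu ^ (1 - S.beta))) * (C * r) := by
          gcongr ?_ * ?_ * ?_
          exact springConst_mul_Rb_sq_le hC
      _ = (1 + C) * S.a * (C ^ 3 * (S.mu ^ (1 - S.beta) * r) + 0) := by ring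
      _ ≤ _ := by gcongr

theorem abs_deriv_one_sub_fext_div_le_of_le_mu (hC : S.Rb ≤ C * S.mu ^ S.beta) {r : ℝ} (h0 : 0 < r)
    (hr : r ≤ S.mu) : |deriv (fun t => 1 - S.fext t / t) r| ≤ (1 + C) / r := by
  rw [S.deriv_one_sub_fext_div h0 (hr.trans (S.mu_lt_rpow_beta.trans S.hRb).le), abs_div,
    abs_of_pos (pow_pos h0 2)]
  calc _ ≤ (1 + C) * r / r ^ 2 := by
        gcongr
        exact (S.abs_tangentIntercept_ft_le_of_le_mu h0.le hr).trans
          (mul_le_mul_of_nonneg_right (slopeBound_le hC) h0.le)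
    _ = (1 + C) / r := by field_simp

theorem abs_deriv_one_sub_fext_div_le (hC : S.Rb ≤ C * S.mu ^ S.beta) {r : ℝ} (hr : S.mu ≤ r)
    (hR : r ≤ S.Rb) : |deriv (fun t => 1 - S.fext t / t) r| ≤
      (1 + C) * S.a * (C ^ 3 * (S.mu ^ (1 - S.beta) / r) + S.mu / r ^ 2) := by
  have h0 : 0 < r := S.mu_pos.trans_le hr
  rw [S.deriv_one_sub_fext_div h0 hR, abs_div, abs_of_pos (pow_pos h0 2)]
  calc _ ≤ (1 + C) * S.a * (C ^ 3 * (S.mu ^ (1 - S.beta) * r) + S.mu) / r ^ 2 := by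
        gcongr
        exact abs_tangentIntercept_ft_le hC hr hR
    _ = _ := by field_simp

end TangentScattering

theorem gbeta_radial_derivative_bound_general (S : TangentScattering) {C' : ℝ}
    (hC : S.Rb ≤ C' * S.mu ^ S.beta) :
    (∀ r : ℝ, 0 < r → r ≤ S.mu →
      |deriv (fun s : ℝ => 1 - S.fext s / s) r| ≤ (1 + C') * (1 + S.a) * (1 + C' ^ 3) / r) ∧
    (∀ r : ℝ, S.mu ≤ r → r ≤ S.Rb →
      |deriv (fun s : ℝ => 1 - S.fext s / s) r| ≤
        (1 + C') * (1 + S.a) * (1 + C' ^ 3) * (S.mu ^ (1 - S.beta) / r + S.mu / r ^ 2)) := by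
  have ha := S.ha
  have hμ := S.mu_pos
  have hC0 := TangentScattering.pos_of_Rb_le hC
  have hC3 : 0 < C' ^ 3 := pow_pos hC0 3
  refine ⟨fun r h0 hr => ?_, fun r hr hR => ?_⟩
  · refine (TangentScattering.abs_deriv_one_sub_fext_div_le_of_le_mu hC h0 hr).trans ?_
    rw [mul_assoc]
    gcongr
    exact le_mul_of_one_le_right (by positivity)
      (one_le_mul_of_one_le_of_one_le (by linarith) (by linarith))
  · have hr0 : 0 < r := hμ.trans_le hr
    calc _ ≤ (1 + C') * S.a * (C' ^ 3 * (S.mu ^ (1 - S.beta) / r) + 1 * (S.mu / r ^ 2)) := by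
          simpa only [one_mul] using TangentScattering.abs_deriv_one_sub_fext_div_le hC hr hR
      _ ≤ (1 + C') * (1 + S.a) * ((1 + C' ^ 3) * (S.mu ^ (1 - S.beta) / r) +
            (1 + C' ^ 3) * (S.mu / r ^ 2)) := by
          gcongr <;> linarith
      _ = _ := by ring

/-- Bounds on the radial derivative of `g_β`, i.e. on `d/dr (1 - f̃(r)/r)`: with a constant `C`
depending only on `a` and `‖w‖_∞`, it is bounded by `C/r` for `0 < r ≤ μ` and by
`C (μ^(1-β̃)/r + μ/r²)` for `μ ≤ r ≤ R_β`. -/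
theorem gbeta_radial_derivative_bound (a M C' : ℝ) (ha : 0 < a) (hM : 0 ≤ M) (hC' : 0 < C') :
    ∃ C > (0:ℝ), ∃ μ₀ > (0:ℝ),
      ∀ S : TangentScattering, S.a = a → (∀ r, S.w r ≤ M) →
        S.Rb ≤ C' * S.mu ^ S.beta → S.mu ≤ μ₀ →
        (∀ r : ℝ, 0 < r → r ≤ S.mu →
          |deriv (fun s : ℝ => 1 - S.fext s / s) r| ≤ C / r) ∧
        (∀ r : ℝ, S.mu ≤ r → r ≤ S.Rb →
          |deriv (fun s : ℝ => 1 - S.fext s / s) r| ≤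
            C * (S.mu ^ (1 - S.beta) / r + S.mu / r ^ 2)) := by
  refine ⟨(1 + C') * (1 + a) * (1 + C' ^ 3), by positivity, 1, one_pos, ?_⟩
  rintro S rfl - hC -
  exact gbeta_radial_derivative_bound_general S hC
end
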